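/- Let S = B(G; I)¹ be the Brandt monoid over a group G with I an infinite set, fix i ∈ I and g ∈ G, and let ρ be the right congruence on S generated by the single pair ((i,g,i), 1). Then S is right coherent, but the right ideal 0ρ = {s ∈ S : s ρ 0} of S is not finitely generated; in fact 0ρ = {0} ∪ ⋃_{j ∈ I, j ≠ i} ({j} × G × I). -/

import Mathlib

def IsRightCongruence {M : Type*} [Monoid M] (r : M → M → Prop) : Prop :=
  Equivalence r ∧ ∀ a b c : M, r a b → r (a * c) (b * c)

def RCongGenBy {M : Type*} [Monoid M] (H : Set (M × M)) (r : M → M → Prop) : Prop :=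
  IsRightCongruence r ∧ (∀ p ∈ H, r p.1 p.2) ∧
    ∀ r' : M → M → Prop, IsRightCongruence r' → (∀ p ∈ H, r' p.1 p.2) →
      ∀ x y : M, r x y → r' x y

def FGRightCongruence {M : Type*} [Monoid M] (r : M → M → Prop) : Prop :=
  ∃ H : Set (M × M), H.Finite ∧ RCongGenBy H r

def RightCoherent (M : Type*) [Monoid M] : Prop :=
  ∀ r : M → M → Prop, FGRightCongruence r → ∀ a b : M,
    (∃ C : Finset M,
      {x : M | (∃ s : M, r x (a * s)) ∧ (∃ t : M, r x (b * t))} =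
        ⋃ c ∈ C, {x : M | ∃ s : M, r x (c * s)}) ∧
    FGRightCongruence (fun u v : M => r (a * u) (a * v))

def IsRightIdeal {M : Type*} [Monoid M] (I : Set M) : Prop :=
  ∀ a ∈ I, ∀ s : M, a * s ∈ I

def FGRightIdeal {M : Type*} [Monoid M] (I : Set M) : Prop :=
  ∃ A : Finset M, I = ⋃ a ∈ A, {x : M | ∃ s : M, x = a * s}

def WeaklyRightNoetherian (M : Type*) [Monoid M] : Prop :=
  ∀ I : Set M, IsRightIdeal I → FGRightIdeal I

/-!
Let `e = (j, 1, j)`. If `e` is not related to zero by a right congruence `ρ`, two elements of the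
right ideal `eS` are `ρ`-related exactly when they differ by left multiplication by some `(j, h, j)`
with `h` in the subgroup `V = {h | (j, h, j) ρ e}` of `G`. So everything `ρ` does on `eS`, and in
particular the annihilator of an element of row `j`, is encoded by `V`, and an annihilator is
finitely generated as soon as `V` is.

To see that `V` is finitely generated when `ρ` is, retract the ideal `S \ {1}` onto `eS`, sending a
row that `ρ` identifies with row `j` isomorphically onto it and every other row to zero. Applied
to a generating pair of `ρ` and its translates, the retraction produces a single element of `V`, and
these finitely many elements generate `V`. This is the argument showing that the vertex groups of a
finitely generated groupoid are finitely generated.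
-/

section RightCongruence

variable {M : Type*} [Monoid M] {r : M → M → Prop}

theorem IsRightCongruence.mul_right (hr : IsRightCongruence r) {a b : M} (h : r a b) (c : M) :
    r (a * c) (b * c) :=
  hr.2 a b c h

theorem IsRightCongruence.annihilator (hr : IsRightCongruence r) (a : M) :
    IsRightCongruence fun u v => r (a * u) (a * v) :=
  ⟨⟨fun _ => hr.1.refl _, hr.1.symm, hr.1.trans⟩,
    fun u v c h => by simpa only [mul_assoc] using hr.mul_right h c⟩

theorem FGRightCongruence.isRightCongruence (hr : FGRightCongruence r) : IsRightCongruence r := by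
  obtain ⟨H, -, hrc, -⟩ := hr
  exact hrc

theorem isRightCongruence_forall_mul_mem_iff (D : Set M) :
    IsRightCongruence fun u v => ∀ t, u * t ∈ D ↔ v * t ∈ D :=
  ⟨⟨fun _ _ => Iff.rfl, fun h t => (h t).symm, fun h h' t => (h t).trans (h' t)⟩,
    fun u v c h t => by simpa only [mul_assoc] using h (c * t)⟩

/-- The cyclic subact `(aρ)S` of `S/ρ`, encoded by its preimage in `S`. -/
def cyclicSubact (r : M → M → Prop) (a : M) : Set M :=
  {x | ∃ s, r x (a * s)}

theorem cyclicSubact_one (hr : IsRightCongruence r) : cyclicSubact r 1 = Set.univ :=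
  Set.eq_univ_of_forall fun x => ⟨x, by rw [one_mul]; exact hr.1.refl x⟩

theorem cyclicSubact_subset (hr : IsRightCongruence r) {a b : M} (h : a ∈ cyclicSubact r b) :
    cyclicSubact r a ⊆ cyclicSubact r b := by
  obtain ⟨t, ht⟩ := h
  rintro x ⟨s, hs⟩
  exact ⟨t * s, hr.1.trans hs (by simpa only [mul_assoc] using hr.mul_right ht s)⟩

end RightCongruence

theorem fg_subgroup_map {G G' : Type*} [Group G] [Group G'] {P : Subgroup G} (hP : P.FG)
    (φ : G →* G') : (P.map φ).FG := by
  obtain ⟨A, rfl, hA⟩ := (Subgroup.fg_iff _).1 hP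
  exact (Subgroup.fg_iff _).2 ⟨φ '' A, (φ.map_closure A).symm, hA.image φ⟩

/-- `S` is the Brandt monoid `B(M; I)¹`, where `f` lists its triples and `z` is its zero. -/
structure IsBrandtMonoid {M I S : Type*} [Monoid M] [Monoid S] (f : I × M × I → S) (z : S) :
    Prop where
  injective : Function.Injective f
  triple_ne_zero : ∀ p, f p ≠ z
  triple_ne_one : ∀ p, f p ≠ 1
  zero_ne_one : z ≠ 1
  cover : ∀ s : S, s = 1 ∨ s = z ∨ ∃ p, f p = s
  mul_eq : ∀ i a j b l, f (i, a, j) * f (j, b, l) = f (i, a * b, l)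
  mul_ne : ∀ i a j k b l, j ≠ k → f (i, a, j) * f (k, b, l) = z
  protected zero_mul : ∀ s, z * s = z
  protected mul_zero : ∀ s, s * z = z

namespace IsBrandtMonoid

section Monoid

variable {M I S : Type*} [Monoid M] [Monoid S] {f : I × M × I → S} {z : S} {r : S → S → Prop}

theorem triple_mul_eq (B : IsBrandtMonoid f z) (i : I) (a : M) (j : I) (s : S) :
    f (i, a, j) * s = z ∨ ∃ b l, f (i, a, j) * s = f (i, a * b, l) := by
  rcases B.cover s with rfl | rfl | ⟨⟨k, b, l⟩, rfl⟩
  · exact .inr ⟨1, j, by simp only [mul_one]⟩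
  · exact .inl (B.mul_zero _)
  · rcases eq_or_ne j k with rfl | hjk
    · exact .inr ⟨b, l, B.mul_eq ..⟩
    · exact .inl (B.mul_ne _ _ _ _ _ _ hjk)

theorem unit_mul_triple (B : IsBrandtMonoid f z) (i : I) (a : M) (l : I) :
    f (i, 1, i) * f (i, a, l) = f (i, a, l) := by
  rw [B.mul_eq, one_mul]

theorem eq_zero_or_eq_triple (B : IsBrandtMonoid f z) {j : I} {s : S} (hs : f (j, 1, j) * s = s) :
    s = z ∨ ∃ b l, s = f (j, b, l) := by
  simpa only [hs, one_mul] using B.triple_mul_eq j 1 j s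

theorem triple_mul_ne_one (B : IsBrandtMonoid f z) (p : I × M × I) (s : S) : f p * s ≠ 1 := by
  rcases B.triple_mul_eq p.1 p.2.1 p.2.2 s with h | ⟨b, l, h⟩
  · exact h.trans_ne B.zero_ne_one
  · exact h.trans_ne (B.triple_ne_one _)

theorem mul_ne_one_of_ne_one_left (B : IsBrandtMonoid f z) {s : S} (hs : s ≠ 1) (t : S) :
    s * t ≠ 1 := by
  rcases B.cover s with rfl | rfl | ⟨p, rfl⟩
  · exact absurd rfl hs
  · rwa [B.zero_mul]
  · exact B.triple_mul_ne_one p t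

theorem mul_ne_one_of_ne_one_right (B : IsBrandtMonoid f z) (s : S) {t : S} (ht : t ≠ 1) :
    s * t ≠ 1 := by
  rcases eq_or_ne s 1 with rfl | hs
  · rwa [one_mul]
  · exact B.mul_ne_one_of_ne_one_left hs t

theorem fgRightCongruence_of_rel_one_zero (B : IsBrandtMonoid f z) (hr : IsRightCongruence r)
    (h : r 1 z) : FGRightCongruence r := by
  refine ⟨{(1, z)}, Set.finite_singleton _, hr, by rintro _ rfl; exact h, ?_⟩
  intro r' hr' hgen x y _
  have rel_zero (s : S) : r' s z := by
    simpa only [one_mul, B.zero_mul] using hr'.mul_right (hgen _ rfl) s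
  exact hr'.1.trans (rel_zero x) (hr'.1.symm (rel_zero y))

/-- The right ideal consisting of zero and the triples whose first coordinate lies in `J`. -/
def rowIdeal (f : I × M × I → S) (z : S) (J : Set I) : Set S :=
  insert z (f '' {p | p.1 ∈ J})

theorem triple_mem_rowIdeal (B : IsBrandtMonoid f z) {J : Set I} {p : I × M × I} :
    f p ∈ rowIdeal f z J ↔ p.1 ∈ J := by
  rw [rowIdeal, Set.mem_insert_iff, B.injective.mem_set_image]
  exact or_iff_right (B.triple_ne_zero p)

theorem one_notMem_rowIdeal (B : IsBrandtMonoid f z) (J : Set I) : (1 : S) ∉ rowIdeal f z J := by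
  rintro (h | ⟨p, -, h⟩)
  · exact B.zero_ne_one h.symm
  · exact B.triple_ne_one p h

theorem not_fgRightIdeal_rowIdeal (B : IsBrandtMonoid f z) {J : Set I} (hJ : J.Infinite) :
    ¬ FGRightIdeal (rowIdeal f z J) := by
  rintro ⟨A, hA⟩
  have finite_rows : (Prod.fst '' (f ⁻¹' (A : Set S))).Finite :=
    (A.finite_toSet.preimage B.injective.injOn).image _
  obtain ⟨j, hjJ, hj⟩ := hJ.exists_notMem_finite finite_rows
  have hmem : f (j, 1, j) ∈ rowIdeal f z J := B.triple_mem_rowIdeal.2 hjJ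
  simp only [hA, Set.mem_iUnion] at hmem
  obtain ⟨a, haA, s, hs⟩ := hmem
  have ha : a ∈ rowIdeal f z J := by
    simp only [hA, Set.mem_iUnion]
    exact ⟨a, haA, 1, (mul_one a).symm⟩
  rcases ha with rfl | ⟨⟨i, b, l⟩, -, rfl⟩
  · exact B.triple_ne_zero _ (hs.trans (B.zero_mul s))
  · rcases B.triple_mul_eq i b l s with h | ⟨c, m, h⟩
    · exact B.triple_ne_zero _ (hs.trans h)
    · have hji : j = i := congrArg Prod.fst (B.injective (hs.trans h))
      exact hj ⟨(i, b, l), haA, hji.symm⟩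

theorem triple_mul_mem_rowIdeal_iff (B : IsBrandtMonoid f z) (i : I) (a : M) (t : S) :
    f (i, a, i) * t ∈ rowIdeal f z {i}ᶜ ↔ t ∈ rowIdeal f z {i}ᶜ := by
  rcases B.cover t with rfl | rfl | ⟨⟨k, b, l⟩, rfl⟩
  · rw [mul_one, B.triple_mem_rowIdeal]
    exact iff_of_false (fun h => h rfl) (B.one_notMem_rowIdeal _)
  · rw [B.mul_zero]
  · rcases eq_or_ne i k with rfl | hik
    · rw [B.mul_eq, B.triple_mem_rowIdeal, B.triple_mem_rowIdeal]
    · rw [B.mul_ne _ _ _ _ _ _ hik, B.triple_mem_rowIdeal]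
      exact iff_of_true (Set.mem_insert _ _) hik.symm

theorem zeroClass_eq_rowIdeal (B : IsBrandtMonoid f z) {i : I} {a : M}
    (hr : RCongGenBy {(f (i, a, i), 1)} r) : {s | r s z} = rowIdeal f z {i}ᶜ := by
  obtain ⟨hrc, hgen, hmin⟩ := hr
  apply Set.Subset.antisymm
  · intro s hs
    have hsz := hmin _ (isRightCongruence_forall_mul_mem_iff (rowIdeal f z {i}ᶜ))
      (by rintro _ rfl t; rw [B.triple_mul_mem_rowIdeal_iff, one_mul]) s z hs 1
    rw [mul_one, mul_one] at hsz
    exact hsz.2 (Set.mem_insert _ _)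
  · rintro _ (rfl | ⟨⟨k, b, l⟩, hk : k ≠ i, rfl⟩)
    · exact hrc.1.refl _
    · have h := hrc.mul_right (hgen _ rfl) (f (k, b, l))
      rw [one_mul, B.mul_ne _ _ _ _ _ _ hk.symm] at h
      exact hrc.1.symm h

/-- The map multiplying every triple on the left by an element `x i` depending only on the row `i`
of the triple. Zero and one, which lie in no row, are sent to zero. -/
noncomputable def rowTranslate (f : I × M × I → S) (z : S) (x : I → S) : S → S :=
  Function.extend f (fun p => x p.1 * f p) fun _ => z

theorem rowTranslate_triple (B : IsBrandtMonoid f z) (x : I → S) (p : I × M × I) :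
    rowTranslate f z x (f p) = x p.1 * f p :=
  B.injective.extend_apply ..

theorem rowTranslate_zero (B : IsBrandtMonoid f z) (x : I → S) : rowTranslate f z x z = z :=
  Function.extend_apply' _ _ _ fun ⟨p, hp⟩ => B.triple_ne_zero p hp

theorem rowTranslate_one (B : IsBrandtMonoid f z) (x : I → S) : rowTranslate f z x 1 = z :=
  Function.extend_apply' _ _ _ fun ⟨p, hp⟩ => B.triple_ne_one p hp

theorem rowTranslate_mul (B : IsBrandtMonoid f z) (x : I → S) {s : S} (hs : s ≠ 1) (t : S) :
    rowTranslate f z x (s * t) = rowTranslate f z x s * t := by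
  rcases B.cover s with rfl | rfl | ⟨⟨i, b, l⟩, rfl⟩
  · exact absurd rfl hs
  · rw [B.zero_mul, B.rowTranslate_zero, B.zero_mul]
  · rw [B.rowTranslate_triple, mul_assoc]
    rcases B.triple_mul_eq i b l t with h | ⟨c, m, h⟩
    · rw [h, B.rowTranslate_zero, B.mul_zero]
    · rw [h, B.rowTranslate_triple]

end Monoid

section Group

variable {G I S : Type*} [Group G] [Monoid S] {f : I × G × I → S} {z : S} {r : S → S → Prop}

theorem exists_mul_mul_eq_self (B : IsBrandtMonoid f z) {a s : S} (ha : a ≠ 1) (h : a * s ≠ z) :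
    ∃ t, a * s * t = a := by
  rcases B.cover a with rfl | rfl | ⟨⟨i, g, j⟩, rfl⟩
  · exact absurd rfl ha
  · exact absurd (B.zero_mul s) h
  · obtain ⟨b, l, hb⟩ := (B.triple_mul_eq i g j s).resolve_left h
    exact ⟨f (l, b⁻¹, j), by rw [hb, B.mul_eq, mul_inv_cancel_right]⟩

theorem exists_eq_mul_of_mul_ne_zero (B : IsBrandtMonoid f z) {u t₀ t : S} (hu : u ≠ 1)
    (ht₀ : t₀ ≠ 1) (ht : t ≠ 1) (h₀ : u * t₀ ≠ z) (h : u * t ≠ z) : ∃ s, t = t₀ * s := by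
  obtain ⟨⟨i, a, j⟩, rfl⟩ := ((B.cover u).resolve_left hu).resolve_left
    (by rintro rfl; exact h (B.zero_mul t))
  obtain ⟨⟨k₀, b₀, l₀⟩, rfl⟩ := ((B.cover t₀).resolve_left ht₀).resolve_left
    (by rintro rfl; exact h₀ (B.mul_zero _))
  obtain ⟨⟨k, b, l⟩, rfl⟩ := ((B.cover t).resolve_left ht).resolve_left
    (by rintro rfl; exact h (B.mul_zero _))
  obtain rfl : j = k₀ := by_contra fun hne => h₀ (B.mul_ne _ _ _ _ _ _ hne)
  obtain rfl : j = k := by_contra fun hne => h (B.mul_ne _ _ _ _ _ _ hne)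
  exact ⟨f (l₀, b₀⁻¹ * b, l), by rw [B.mul_eq, mul_inv_cancel_left]⟩

theorem mem_cyclicSubact_of_not_rel_zero (B : IsBrandtMonoid f z) (hr : IsRightCongruence r)
    {a b x : S} (ha : a ≠ 1) (hxa : x ∈ cyclicSubact r a) (hxb : x ∈ cyclicSubact r b)
    (hx : ¬ r x z) : a ∈ cyclicSubact r b := by
  obtain ⟨s, hs⟩ := hxa
  obtain ⟨t, ht⟩ := hxb
  obtain ⟨w, hw⟩ := B.exists_mul_mul_eq_self ha (s := s) (by rintro h; exact hx (h ▸ hs))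
  have h := hr.mul_right (hr.1.trans (hr.1.symm hs) ht) w
  rw [hw, mul_assoc] at h
  exact ⟨t * w, h⟩

theorem exists_cyclicSubact_inter_eq (B : IsBrandtMonoid f z) (hr : IsRightCongruence r) (a b : S) :
    ∃ c, cyclicSubact r a ∩ cyclicSubact r b = cyclicSubact r c := by
  rcases eq_or_ne a 1 with rfl | ha
  · exact ⟨b, by rw [cyclicSubact_one hr, Set.univ_inter]⟩
  by_cases hx : ∃ x ∈ cyclicSubact r a ∩ cyclicSubact r b, ¬ r x z
  · obtain ⟨x, ⟨hxa, hxb⟩, hxz⟩ := hx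
    exact ⟨a, Set.inter_eq_left.2
      (cyclicSubact_subset hr (B.mem_cyclicSubact_of_not_rel_zero hr ha hxa hxb hxz))⟩
  · push Not at hx
    have zero_mem (c : S) : z ∈ cyclicSubact r c := ⟨z, by rw [B.mul_zero]; exact hr.1.refl z⟩
    exact ⟨z, Set.Subset.antisymm (fun x h => ⟨1, by simpa only [mul_one] using hx x h⟩)
      (Set.subset_inter (cyclicSubact_subset hr (zero_mem a))
        (cyclicSubact_subset hr (zero_mem b)))⟩

/-- The isotropy group of row `j` modulo a right congruence: the vertex group at `j` of the groupoid
on `I` in which `h : i ⟶ j` is an arrow when `(i, h, j)` is related to `(j, 1, j)`. -/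
def vertexGroup (B : IsBrandtMonoid f z) (hr : IsRightCongruence r) (j : I) : Subgroup G where
  carrier := {h | r (f (j, h, j)) (f (j, 1, j))}
  one_mem' := hr.1.refl _
  mul_mem' {a b} ha hb := by
    have h := hr.mul_right ha (f (j, b, j))
    rw [B.mul_eq, B.mul_eq, one_mul] at h
    exact hr.1.trans h hb
  inv_mem' {a} ha := by
    have h := hr.mul_right ha (f (j, a⁻¹, j))
    rw [B.mul_eq, B.mul_eq, one_mul, mul_inv_cancel] at h
    exact hr.1.symm h

theorem mem_vertexGroup (B : IsBrandtMonoid f z) (hr : IsRightCongruence r) {j : I} {h : G} :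
    h ∈ B.vertexGroup hr j ↔ r (f (j, h, j)) (f (j, 1, j)) :=
  Iff.rfl

theorem eq_zero_of_rel_zero (B : IsBrandtMonoid f z) (hr : IsRightCongruence r) {j : I}
    (hj : ¬ r (f (j, 1, j)) z) {s : S} (hs : f (j, 1, j) * s = s) (h : r s z) : s = z := by
  rcases B.eq_zero_or_eq_triple hs with rfl | ⟨b, l, rfl⟩
  · rfl
  · have h' := hr.mul_right h (f (l, b⁻¹, j))
    rw [B.mul_eq, mul_inv_cancel, B.zero_mul] at h'
    exact absurd h' hj

theorem exists_mem_vertexGroup_eq_mul (B : IsBrandtMonoid f z) (hr : IsRightCongruence r) {j : I}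
    (hj : ¬ r (f (j, 1, j)) z) {s t : S} (hs : f (j, 1, j) * s = s) (ht : f (j, 1, j) * t = t)
    (hst : r s t) : ∃ h ∈ B.vertexGroup hr j, s = f (j, h, j) * t := by
  rcases B.eq_zero_or_eq_triple ht with rfl | ⟨b, l, rfl⟩
  · exact ⟨1, one_mem _, by rw [B.mul_zero, B.eq_zero_of_rel_zero hr hj hs hst]⟩
  rcases B.eq_zero_or_eq_triple hs with rfl | ⟨a, k, rfl⟩
  · exact absurd (B.eq_zero_of_rel_zero hr hj ht (hr.1.symm hst)) (B.triple_ne_zero _)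
  have h := hr.mul_right hst (f (l, b⁻¹, j))
  rw [B.mul_eq, mul_inv_cancel] at h
  rcases eq_or_ne k l with rfl | hkl
  · rw [B.mul_eq] at h
    exact ⟨a * b⁻¹, h, by rw [B.mul_eq, inv_mul_cancel_right]⟩
  · rw [B.mul_ne _ _ _ _ _ _ hkl] at h
    exact absurd (hr.1.symm h) hj

theorem fgRightCongruence_of_fg_vertexGroup (B : IsBrandtMonoid f z) (hr : IsRightCongruence r)
    {j : I} (h1 : r 1 (f (j, 1, j))) (hj : ¬ r (f (j, 1, j)) z) (hfg : (B.vertexGroup hr j).FG) :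
    FGRightCongruence r := by
  obtain ⟨A, hA, hAfin⟩ := (Subgroup.fg_iff _).1 hfg
  refine ⟨insert (1, f (j, 1, j)) ((fun h => (f (j, h, j), f (j, 1, j))) '' A),
    (hAfin.image _).insert _, hr, ?_, ?_⟩
  · rintro _ (rfl | ⟨h, hh, rfl⟩)
    · exact h1
    · exact (B.mem_vertexGroup hr).1 (hA ▸ Subgroup.subset_closure hh)
  intro r' hr' hgen u v huv
  have rel_unit_mul (s : S) : r' s (f (j, 1, j) * s) := by
    simpa only [one_mul] using hr'.mul_right (hgen _ (Set.mem_insert _ _)) s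
  have unit_mul_mul (s : S) : f (j, 1, j) * (f (j, 1, j) * s) = f (j, 1, j) * s := by
    rw [← mul_assoc, B.unit_mul_triple]
  have vertexGroup_le : B.vertexGroup hr j ≤ B.vertexGroup hr' j := by
    rw [← hA, Subgroup.closure_le]
    exact fun h hh => hgen _ (Set.mem_insert_of_mem _ (Set.mem_image_of_mem _ hh))
  have rel_unit_mul_unit_mul : r (f (j, 1, j) * u) (f (j, 1, j) * v) :=
    hr.1.trans (hr.1.symm (by simpa only [one_mul] using hr.mul_right h1 u))
      (hr.1.trans huv (by simpa only [one_mul] using hr.mul_right h1 v))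
  obtain ⟨h, hh, huv'⟩ := B.exists_mem_vertexGroup_eq_mul hr hj (unit_mul_mul u) (unit_mul_mul v)
    rel_unit_mul_unit_mul
  have rel_translate := hr'.mul_right (vertexGroup_le hh) (f (j, 1, j) * v)
  rw [← huv', unit_mul_mul] at rel_translate
  exact hr'.1.trans (rel_unit_mul u) (hr'.1.trans rel_translate (hr'.1.symm (rel_unit_mul v)))

theorem vertexGroup_annihilator (B : IsBrandtMonoid f z) (hr : IsRightCongruence r)
    (j : I) (g : G) (k : I) :
    B.vertexGroup (hr.annihilator (f (j, g, k))) k =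
      (B.vertexGroup hr j).map (MulAut.conj g⁻¹).toMonoidHom := by
  ext h
  rw [Subgroup.mem_map_equiv, mem_vertexGroup, mem_vertexGroup]
  simp only [map_inv, MulAut.inv_symm, MulAut.conj_apply, B.mul_eq, mul_one]
  constructor
  · intro h'
    simpa only [B.mul_eq, mul_inv_cancel] using hr.mul_right h' (f (k, g⁻¹, j))
  · intro h'
    simpa only [B.mul_eq, inv_mul_cancel_right, one_mul] using hr.mul_right h' (f (j, g, k))

/-- A retraction of the ideal `S \ {1}` onto the row `(j, 1, j)S` that is compatible with the
right congruence `r` on the rows related to row `j` and sends all others to zero. Its value at `1`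
is irrelevant. -/
structure IsRowRetraction (f : I × G × I → S) (z : S) (r : S → S → Prop) (j : I) (N : S → S) :
    Prop where
  map_mul : ∀ s t, s ≠ 1 → N (s * t) = N s * t
  map_unit : N (f (j, 1, j)) = f (j, 1, j)
  unit_mul_map : ∀ s, f (j, 1, j) * N s = N s
  map_eq_zero_or_rel : ∀ s ≠ 1, N s = z ∨ r s (N s)
  rel_of_rel_row : ∀ s ≠ 1, ∀ t, r s (f (j, 1, j) * t) → r s (N s)

theorem exists_unit_transport (B : IsBrandtMonoid f z) (hr : IsRightCongruence r) (i j : I) :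
    ∃ x, f (j, 1, j) * x = x ∧ (x = z ∨ r (f (i, 1, i)) x) ∧
      (∀ t, r (f (i, 1, i)) (f (j, 1, j) * t) → r (f (i, 1, i)) x) ∧
      (i = j → x = f (j, 1, j)) := by
  rcases eq_or_ne i j with rfl | hij
  · exact ⟨f (i, 1, i), B.unit_mul_triple .., .inr (hr.1.refl _), fun _ _ => hr.1.refl _,
      fun _ => rfl⟩
  by_cases h : ∃ t, r (f (i, 1, i)) (f (j, 1, j) * t)
  · obtain ⟨t, ht⟩ := h
    exact ⟨f (j, 1, j) * t, by rw [← mul_assoc, B.unit_mul_triple], .inr ht, fun _ _ => ht,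
      fun h => absurd h hij⟩
  · exact ⟨z, B.mul_zero _, .inl rfl, fun t ht => absurd ⟨t, ht⟩ h, fun h => absurd h hij⟩

theorem exists_isRowRetraction (B : IsBrandtMonoid f z) (hr : IsRightCongruence r) (j : I) :
    ∃ N, IsRowRetraction f z r j N := by
  choose x unit_mul_x x_eq_zero_or_rel rel_of_rel x_self using
    fun i => B.exists_unit_transport hr i j
  refine ⟨rowTranslate f z x, fun s t hs => B.rowTranslate_mul x hs t, ?_, ?_, ?_, ?_⟩
  · rw [B.rowTranslate_triple, x_self j rfl, B.unit_mul_triple]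
  · intro s
    rcases B.cover s with rfl | rfl | ⟨p, rfl⟩
    · rw [B.rowTranslate_one, B.mul_zero]
    · rw [B.rowTranslate_zero, B.mul_zero]
    · rw [B.rowTranslate_triple, ← mul_assoc, unit_mul_x]
  · intro s hs
    rcases B.cover s with rfl | rfl | ⟨⟨i, b, l⟩, rfl⟩
    · exact absurd rfl hs
    · exact .inl (B.rowTranslate_zero x)
    · rw [B.rowTranslate_triple]
      refine (x_eq_zero_or_rel i).imp (fun h => by rw [h, B.zero_mul]) fun h => ?_
      simpa only [B.unit_mul_triple] using hr.mul_right h (f (i, b, l))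
  · intro s hs t hst
    rcases B.cover s with rfl | rfl | ⟨⟨i, b, l⟩, rfl⟩
    · exact absurd rfl hs
    · rw [B.rowTranslate_zero]; exact hr.1.refl _
    · have h := hr.mul_right hst (f (l, b⁻¹, i))
      rw [B.mul_eq, mul_inv_cancel, mul_assoc] at h
      rw [B.rowTranslate_triple]
      simpa only [B.unit_mul_triple] using hr.mul_right (rel_of_rel i _ h) (f (i, b, l))

namespace IsRowRetraction

variable {j : I} {N : S → S}

theorem map_zero (hN : IsRowRetraction f z r j N) (B : IsBrandtMonoid f z) : N z = z := by
  simpa only [B.mul_zero] using hN.map_mul z z B.zero_ne_one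

theorem map_triple (hN : IsRowRetraction f z r j N) (B : IsBrandtMonoid f z) (g : G) (k : I) :
    N (f (j, g, k)) = f (j, g, k) := by
  rw [← B.unit_mul_triple j g k, hN.map_mul _ _ (B.triple_ne_one _), hN.map_unit]

theorem map_rel_map (hN : IsRowRetraction f z r j N) (hr : IsRightCongruence r) {s t : S}
    (hs : s ≠ 1) (ht : t ≠ 1) (hst : r s t) : r (N s) (N t) := by
  have of_rel {s t : S} (ht : t ≠ 1) (hst : r s t) (h : r s (N s)) : r (N s) (N t) := by
    have hts : r t (f (j, 1, j) * N s) := by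
      rw [hN.unit_mul_map]
      exact hr.1.trans (hr.1.symm hst) h
    exact hr.1.trans (hr.1.symm h) (hr.1.trans hst (hN.rel_of_rel_row t ht _ hts))
  rcases hN.map_eq_zero_or_rel s hs with hs0 | hs'
  · rcases hN.map_eq_zero_or_rel t ht with ht0 | ht'
    · rw [hs0, ht0]; exact hr.1.refl z
    · exact hr.1.symm (of_rel hs (hr.1.symm hst) ht')
  · exact of_rel ht hst hs'

theorem map_eq_zero_iff_of_rel (hN : IsRowRetraction f z r j N) (B : IsBrandtMonoid f z)
    (hr : IsRightCongruence r) (hj : ¬ r (f (j, 1, j)) z) {s t : S} (hs : s ≠ 1) (ht : t ≠ 1)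
    (hst : r s t) : N s = z ↔ N t = z := by
  have hNst := hN.map_rel_map hr hs ht hst
  exact ⟨fun h => B.eq_zero_of_rel_zero hr hj (hN.unit_mul_map t) (hr.1.symm (h ▸ hNst)),
    fun h => B.eq_zero_of_rel_zero hr hj (hN.unit_mul_map s) (h ▸ hNst)⟩

theorem exists_forall_map_mul_eq (hN : IsRowRetraction f z r j N) (B : IsBrandtMonoid f z)
    (hr : IsRightCongruence r) (hj : ¬ r (f (j, 1, j)) z) {u v : S} (huv : r u v) :
    ∃ h ∈ B.vertexGroup hr j, ∀ t ≠ 1, N (u * t) = f (j, h, j) * N (v * t) := by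
  rcases eq_or_ne u v with rfl | hne
  · exact ⟨1, one_mem _, fun t _ => (hN.unit_mul_map _).symm⟩
  have hu {t : S} (ht : t ≠ 1) : u * t ≠ 1 := B.mul_ne_one_of_ne_one_right u ht
  have hv {t : S} (ht : t ≠ 1) : v * t ≠ 1 := B.mul_ne_one_of_ne_one_right v ht
  have map_eq_zero_iff {t : S} (ht : t ≠ 1) : N (u * t) = z ↔ N (v * t) = z :=
    hN.map_eq_zero_iff_of_rel B hr hj (hu ht) (hv ht) (hr.mul_right huv t)
  have ne_zero_of_map {s : S} (h : N s ≠ z) : s ≠ z := by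
    rintro rfl
    exact h (hN.map_zero B)
  by_cases hex : ∃ t₀ ≠ 1, N (u * t₀) ≠ z
  · obtain ⟨t₀, ht₀, hut₀⟩ := hex
    obtain ⟨h, hh, map_t₀⟩ := B.exists_mem_vertexGroup_eq_mul hr hj (hN.unit_mul_map _)
      (hN.unit_mul_map _) (hN.map_rel_map hr (hu ht₀) (hv ht₀) (hr.mul_right huv t₀))
    have hvt₀ : N (v * t₀) ≠ z := mt (map_eq_zero_iff ht₀).2 hut₀
    refine ⟨h, hh, fun t ht => ?_⟩
    by_cases hut : N (u * t) = z
    · rw [hut, (map_eq_zero_iff ht).1 hut, B.mul_zero]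
    have hvt : N (v * t) ≠ z := mt (map_eq_zero_iff ht).2 hut
    obtain ⟨s, rfl⟩ : ∃ s, t = t₀ * s := by
      rcases eq_or_ne u 1 with rfl | hu1
      · exact B.exists_eq_mul_of_mul_ne_zero hne.symm ht₀ ht (ne_zero_of_map hvt₀)
          (ne_zero_of_map hvt)
      · exact B.exists_eq_mul_of_mul_ne_zero hu1 ht₀ ht (ne_zero_of_map hut₀) (ne_zero_of_map hut)
    calc N (u * (t₀ * s)) = N (u * t₀) * s := by rw [← mul_assoc, hN.map_mul _ _ (hu ht₀)]
      _ = f (j, h, j) * (N (v * t₀) * s) := by rw [map_t₀, mul_assoc]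
      _ = f (j, h, j) * N (v * (t₀ * s)) := by rw [← hN.map_mul _ _ (hv ht₀), mul_assoc]
  · push Not at hex
    refine ⟨1, one_mem _, fun t ht => ?_⟩
    rw [hN.unit_mul_map, hex t ht, (map_eq_zero_iff ht).1 (hex t ht)]

end IsRowRetraction

theorem isRightCongruence_forall_map_mul_eq (B : IsBrandtMonoid f z) {j : I} {N : S → S}
    (hN : ∀ s, f (j, 1, j) * N s = N s) (K : Subgroup G) :
    IsRightCongruence fun u v => ∀ t ≠ 1, ∃ h ∈ K, N (u * t) = f (j, h, j) * N (v * t) := by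
  refine ⟨⟨fun u t _ => ⟨1, one_mem K, (hN _).symm⟩, ?_, ?_⟩, ?_⟩
  · intro u v huv t ht
    obtain ⟨h, hh, e⟩ := huv t ht
    exact ⟨h⁻¹, inv_mem hh, by rw [e, ← mul_assoc, B.mul_eq, inv_mul_cancel, hN]⟩
  · intro u v w huv hvw t ht
    obtain ⟨h, hh, e⟩ := huv t ht
    obtain ⟨h', hh', e'⟩ := hvw t ht
    exact ⟨h * h', mul_mem hh hh', by rw [e, e', ← mul_assoc, B.mul_eq]⟩
  · intro u v c huv t ht
    simpa only [mul_assoc] using huv (c * t) (B.mul_ne_one_of_ne_one_right c ht)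

theorem fg_vertexGroup (B : IsBrandtMonoid f z) (hr : IsRightCongruence r)
    (hfg : FGRightCongruence r) {j : I} (hj : ¬ r (f (j, 1, j)) z) :
    (B.vertexGroup hr j).FG := by
  obtain ⟨H, hH, -, hgen, hmin⟩ := hfg
  obtain ⟨N, hN⟩ := B.exists_isRowRetraction hr j
  choose c c_mem map_mul_eq using
    fun p : H => hN.exists_forall_map_mul_eq B hr hj (hgen p p.2)
  have : Finite H := hH
  refine (Subgroup.fg_iff _).2 ⟨Set.range c, le_antisymm ?_ fun h hh => ?_, Set.finite_range c⟩
  · rw [Subgroup.closure_le]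
    exact Set.range_subset_iff.2 c_mem
  · obtain ⟨k, hk, e⟩ := hmin _
      (B.isRightCongruence_forall_map_mul_eq hN.unit_mul_map (Subgroup.closure (Set.range c)))
      (fun p hp t ht => ⟨c ⟨p, hp⟩, Subgroup.subset_closure ⟨_, rfl⟩, map_mul_eq ⟨p, hp⟩ t ht⟩)
      _ _ hh (f (j, 1, j)) (B.triple_ne_one _)
    rw [B.mul_eq, mul_one, B.unit_mul_triple, hN.map_unit, hN.map_triple B, B.mul_eq, mul_one] at e
    have hhk : h = k := congrArg (fun p => p.2.1) (B.injective e)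
    exact hhk ▸ hk

theorem fgRightCongruence_annihilator (B : IsBrandtMonoid f z) (hfg : FGRightCongruence r)
    (a : S) : FGRightCongruence fun u v => r (a * u) (a * v) := by
  have hr := hfg.isRightCongruence
  by_cases haz : r a z
  · refine B.fgRightCongruence_of_rel_one_zero (hr.annihilator a) ?_
    rwa [mul_one, B.mul_zero]
  rcases B.cover a with rfl | rfl | ⟨⟨j, g, k⟩, rfl⟩
  · simpa only [one_mul] using hfg
  · exact absurd (hr.1.refl _) haz
  have hj : ¬ r (f (j, 1, j)) z := fun h => haz <| by
    simpa only [B.unit_mul_triple, B.zero_mul] using hr.mul_right h (f (j, g, k))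
  have mul_unit : f (j, g, k) * f (k, 1, k) = f (j, g, k) := by rw [B.mul_eq, mul_one]
  refine B.fgRightCongruence_of_fg_vertexGroup (hr.annihilator (f (j, g, k))) (j := k) ?_ ?_ ?_
  · rw [mul_one, mul_unit]
    exact hr.1.refl _
  · rwa [mul_unit, B.mul_zero]
  · rw [B.vertexGroup_annihilator hr]
    exact fg_subgroup_map (B.fg_vertexGroup hr hfg hj) _

theorem rightCoherent (B : IsBrandtMonoid f z) : RightCoherent S := by
  intro r hfg a b
  refine ⟨?_, B.fgRightCongruence_annihilator hfg a⟩
  obtain ⟨c, hc⟩ := B.exists_cyclicSubact_inter_eq hfg.isRightCongruence a b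
  exact ⟨{c}, by rw [Finset.set_biUnion_singleton]; exact hc⟩

end Group

end IsBrandtMonoid

theorem stmt4 {G : Type*} [Group G] {I : Type*} [Infinite I]
    {S : Type*} [Monoid S] (f : I × G × I → S) (z : S)
    (hinj : Function.Injective f)
    (hfz : ∀ p : I × G × I, f p ≠ z) (hf1 : ∀ p : I × G × I, f p ≠ 1) (hz1 : z ≠ 1)
    (hcover : ∀ s : S, s = 1 ∨ s = z ∨ ∃ p : I × G × I, f p = s)
    (hmul_eq : ∀ (i : I) (a : G) (j : I) (b : G) (l : I),
      f (i, a, j) * f (j, b, l) = f (i, a * b, l))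
    (hmul_ne : ∀ (i : I) (a : G) (j k : I) (b : G) (l : I), j ≠ k →
      f (i, a, j) * f (k, b, l) = z)
    (hzmul : ∀ s : S, z * s = z ∧ s * z = z)
    (i : I) (g : G)
    (r : S → S → Prop)
    (hr : RCongGenBy ({(f (i, g, i), (1 : S))} : Set (S × S)) r) :
    RightCoherent S ∧
    ¬ FGRightIdeal {s : S | r s z} ∧
    {s : S | r s z} = insert z (f '' {p : I × G × I | p.1 ≠ i}) := by
  have B : IsBrandtMonoid f z := ⟨hinj, hfz, hf1, hz1, hcover, hmul_eq, hmul_ne,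
    fun s => (hzmul s).1, fun s => (hzmul s).2⟩
  have zeroClass : {s | r s z} = IsBrandtMonoid.rowIdeal f z {i}ᶜ := B.zeroClass_eq_rowIdeal hr
  refine ⟨B.rightCoherent, ?_, zeroClass⟩
  rw [zeroClass]
  exact B.not_fgRightIdeal_rowIdeal (Set.finite_singleton i).infinite_compl
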